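/- Fix a labelled Markov chain ⟨S, L, τ, ℓ⟩. For every probabilistic bisimulation R ⊆ S×S with ≃ ⊆ R ⊆ ∼, the relation Refine(R) is a probabilistic bisimulation with ≃ ⊆ Refine(R) ⊆ ∼. (In particular, membership of R in the interval [≃, ∼] of bisimulations is a loop invariant of the iteration R ↦ Refine(R).) -/

import Mathlib

open Finset Filter
open scoped Classical

/-- `μ` is a probability distribution on the finite type `X`. -/
def IsDist {X : Type*} [Fintype X] (μ : X → ℝ) : Prop :=
  (∀ x, 0 ≤ μ x) ∧ ∑ x, μ x = 1

/-- `ω` is a coupling of the distributions `μ` and `ν`. -/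
def IsCoupling {X : Type*} [Fintype X] (ω : X × X → ℝ) (μ ν : X → ℝ) : Prop :=
  IsDist ω ∧ (∀ x, ∑ y, ω (x, y) = μ x) ∧ (∀ x, ∑ y, ω (y, x) = ν x)

/-- Total variation distance: the maximum pointwise difference. -/
noncomputable def dTV {X : Type*} [Fintype X] (μ ν : X → ℝ) : ℝ :=
  ⨆ x, |μ x - ν x|

/-- The support of a (sub)distribution: points of positive probability. -/
def psupp {X : Type*} (μ : X → ℝ) : Set X := {x | 0 < μ x}

/-- Distance between functions into distributions. -/
noncomputable def dF {A B : Type*} [Fintype B] (f g : A → B → ℝ) : ℝ :=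
  ⨆ a, dTV (f a) (g a)

/-- `τ` is a transition probability function on `S`. -/
def IsTransFn {S : Type*} [Fintype S] (τ : S → S → ℝ) : Prop := ∀ s, IsDist (τ s)

/-- The diagonal `S²_Δ`. -/
def SDelta (S : Type*) : Set (S × S) := {p | p.1 = p.2}

/-- `P` is a policy for `τ` (with labelling `ℓ`). -/
def IsPolicy {S L : Type*} [Fintype S] (ℓ : S → L) (τ : S → S → ℝ)
    (P : S × S → S × S → ℝ) : Prop :=
  (∀ p, IsDist (P p)) ∧
  (∀ p : S × S, ℓ p.1 = ℓ p.2 → IsCoupling (P p) (τ p.1) (τ p.2)) ∧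
  (∀ p : S × S, ℓ p.1 ≠ ℓ p.2 → psupp (P p) = {p})

/-- A policy is `S²_Δ`-closed if the support of `P (s,s)` lies in the diagonal. -/
def DeltaClosed {S : Type*} (P : S × S → S × S → ℝ) : Prop :=
  ∀ s : S, psupp (P (s, s)) ⊆ SDelta S

/-- `d` is a `[0,1]`-valued function. -/
def Is01 {A : Type*} (d : A → ℝ) : Prop := ∀ a, 0 ≤ d a ∧ d a ≤ 1

/-- `d` is the least fixed point of `F` on the complete lattice of `[0,1]`-valued functions. -/
def IsLfpOn {A : Type*} (F : (A → ℝ) → (A → ℝ)) (d : A → ℝ) : Prop :=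
  Is01 d ∧ F d = d ∧ ∀ e, Is01 e → F e = e → ∀ a, d a ≤ e a

/-- The map `Γ_P` whose least fixed point is `γ_P`. -/
noncomputable def GammaF {S L : Type*} [Fintype S] (ℓ : S → L)
    (P : S × S → S × S → ℝ) (d : S × S → ℝ) : S × S → ℝ :=
  fun p => if ℓ p.1 ≠ ℓ p.2 then 1 else ∑ q, P p q * d q

/-- The map `Δ_τ` whose least fixed point is the probabilistic bisimilarity distance `δ_τ`. -/
noncomputable def DeltaF {S L : Type*} [Fintype S] (ℓ : S → L)
    (τ : S → S → ℝ) (d : S × S → ℝ) : S × S → ℝ :=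
  fun p => if ℓ p.1 ≠ ℓ p.2 then 1
    else sInf {r | ∃ ω, IsCoupling ω (τ p.1) (τ p.2) ∧ r = ∑ q, ω q * d q}

/-- The map whose least fixed point is `ρ_P`, the probability of reaching `S²_Δ`. -/
noncomputable def ReachF {S : Type*} [Fintype S]
    (P : S × S → S × S → ℝ) (e : S × S → ℝ) : S × S → ℝ :=
  fun p => if p.1 = p.2 then 1 else ∑ q, P p q * e q

/-- States `s` and `t` are robustly probabilistically bisimilar. -/
def Robust {S L : Type*} [Fintype S] (ℓ : S → L) (τ : S → S → ℝ) (s t : S) : Prop :=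
  ∃ P ρ, IsPolicy ℓ τ P ∧ IsLfpOn (ReachF P) ρ ∧ ρ (s, t) = 1

/-- `R` is a probabilistic bisimulation. -/
def IsBisim {S L : Type*} [Fintype S] (ℓ : S → L) (τ : S → S → ℝ)
    (R : Set (S × S)) : Prop :=
  Equivalence (fun s t => (s, t) ∈ R) ∧
  ∀ p ∈ R, ℓ p.1 = ℓ p.2 ∧ ∃ ω, IsCoupling ω (τ p.1) (τ p.2) ∧ psupp ω ⊆ R

/-- Probabilistic bisimilarity `∼`. -/
def Bisimilar {S L : Type*} [Fintype S] (ℓ : S → L) (τ : S → S → ℝ) (s t : S) : Prop :=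
  ∃ R, IsBisim ℓ τ R ∧ (s, t) ∈ R

/-- A step of a path in `⟨S×S, P⟩` supported by `R`. -/
def SupStep {S : Type*} (P : S × S → S × S → ℝ) (R : Set (S × S)) (a b : S × S) : Prop :=
  a ∈ R ∧ psupp (P a) ⊆ R ∧ 0 < P a b

/-- `R` supports a path from `p` to `S²_Δ` in `⟨S×S, P⟩`. -/
def SupportsPathToDelta {S : Type*} (P : S × S → S × S → ℝ) (R : Set (S × S))
    (p : S × S) : Prop :=
  ∃ q : S × S, q.1 = q.2 ∧ Relation.ReflTransGen (SupStep P R) p q ∧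
    q ∈ R ∧ psupp (P q) ⊆ R

/-- `R` is a robust bisimulation. -/
def IsRobustBisim {S L : Type*} [Fintype S] (ℓ : S → L) (τ : S → S → ℝ)
    (R : Set (S × S)) : Prop :=
  IsBisim ℓ τ R ∧ ∀ p ∈ R, ∃ P, IsPolicy ℓ τ P ∧ SupportsPathToDelta P R p

/-- The function `Filter` from the algorithm. -/
def FilterFn {S L : Type*} [Fintype S] (ℓ : S → L) (τ : S → S → ℝ)
    (R : Set (S × S)) : Set (S × S) :=
  {p ∈ R | ∃ P, IsPolicy ℓ τ P ∧ SupportsPathToDelta P R p}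

/-- The function `Prune` from the algorithm. -/
def PruneFn {S : Type*} (Q : Set (S × S)) : Set (S × S) :=
  {p ∈ Q | ∀ u : S, ((p.2, u) ∈ Q → (p.1, u) ∈ Q) ∧ ((u, p.1) ∈ Q → (u, p.2) ∈ Q)}

/-- `B` is the greatest probabilistic bisimulation contained in `Q` (i.e. `B = Bisim(Q)`). -/
def IsGreatestBisimIn {S L : Type*} [Fintype S] (ℓ : S → L) (τ : S → S → ℝ)
    (Q B : Set (S × S)) : Prop :=
  IsBisim ℓ τ B ∧ B ⊆ Q ∧ ∀ B', IsBisim ℓ τ B' → B' ⊆ Q → B' ⊆ B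

/-- Reachability in the Markov chain `⟨S×S, P⟩`. -/
def Reach {S : Type*} (P : S × S → S × S → ℝ) (p q : S × S) : Prop :=
  Relation.ReflTransGen (fun a b => 0 < P a b) p q

/-- `C` is a communication class of `⟨S×S, P⟩`. -/
def IsCommClass {S : Type*} (P : S × S → S × S → ℝ) (C : Set (S × S)) : Prop :=
  ∃ p, C = {q | Reach P p q ∧ Reach P q p}

/-- `C` is closed: no transition of positive probability leaves `C`. -/
def IsClosedClass {S : Type*} (P : S × S → S × S → ℝ) (C : Set (S × S)) : Prop :=
  ∀ p ∈ C, psupp (P p) ⊆ C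

/-!
Reaching the diagonal is treated as an attractor: `ReachesDiag ℓ τ X p` asks for a path from `p` to
`S²_Δ` along couplings with support in `X`, possibly a new coupling at each step. Couplings with
support in `X` are closed under averaging, so one policy can use couplings of the largest possible
support everywhere, and it realises all these paths at once. Hence `Filter(R)` is the attractor of
the diagonal in `R`. Moreover, `≃` is the greatest relation `X` from every element of which the
diagonal is reached inside `X`: under a fixed policy, the pairs of reaching probability `1` form
such an `X`, and conversely a pair of `X` with minimal reaching probability passes this minimum on
to its successors and eventually to the diagonal, where it is `1`.

Gluing couplings along the middle distribution turns composition of relations into composition of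
supports. It follows that `≃` is transitive, and that if `R ⊇ ≃` is stable under composition with
`≃` on both sides, then so is the attractor of the diagonal in `R`; hence pruning keeps `≃`.
-/

section Dist

variable {X : Type*} [Fintype X] {μ : X → ℝ}

theorem IsDist.eq_of_le_of_sum_mul_eq {f : X → ℝ} {c : ℝ} (hμ : IsDist μ)
    (hle : ∀ x ∈ psupp μ, f x ≤ c) (hsum : ∑ x, μ x * f x = c) : ∀ x ∈ psupp μ, f x = c := by
  have hterm : ∀ x ∈ Finset.univ, μ x * f x ≤ μ x * c := fun x _ => by
    rcases (hμ.1 x).eq_or_lt with h0 | hpos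
    · simp [← h0]
    · exact mul_le_mul_of_nonneg_left (hle x hpos) hpos.le
  have htotal : ∑ x, μ x * f x = ∑ x, μ x * c := by
    rw [hsum, ← Finset.sum_mul, hμ.2, one_mul]
  intro x hx
  exact mul_left_cancel₀ hx.ne'
    ((Finset.sum_eq_sum_iff_of_le hterm).1 htotal x (Finset.mem_univ x))

theorem IsDist.eq_of_ge_of_sum_mul_eq {f : X → ℝ} {c : ℝ} (hμ : IsDist μ)
    (hge : ∀ x ∈ psupp μ, c ≤ f x) (hsum : ∑ x, μ x * f x = c) : ∀ x ∈ psupp μ, f x = c :=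
  fun x hx => neg_injective <| hμ.eq_of_le_of_sum_mul_eq (f := fun y => -f y)
    (fun y hy => neg_le_neg (hge y hy)) (by simp [hsum]) x hx

theorem isDist_single [DecidableEq X] (x : X) : IsDist (Pi.single x 1 : X → ℝ) :=
  ⟨fun y => (Pi.single_nonneg (α := fun _ => ℝ)).2 zero_le_one y, by simp⟩

end Dist

theorem psupp_single {X : Type*} [DecidableEq X] (x : X) :
    psupp (Pi.single x 1 : X → ℝ) = {x} := by
  ext y
  by_cases h : y = x <;> simp [psupp, h]

section Coupling

variable {X : Type*} [Fintype X] {μ ν κ : X → ℝ} {ω ω₁ ω₂ : X × X → ℝ}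

theorem IsDist.of_sum_fst (hμ : IsDist μ) (hω : ∀ p, 0 ≤ ω p) (hfst : ∀ x, ∑ y, ω (x, y) = μ x) :
    IsDist ω :=
  ⟨hω, by simp only [Fintype.sum_prod_type, hfst, hμ.2]⟩

namespace IsCoupling

theorem isDist_fst (h : IsCoupling ω μ ν) : IsDist μ :=
  ⟨fun x => h.2.1 x ▸ Finset.sum_nonneg fun y _ => h.1.1 (x, y), by
    simp only [← h.2.1, ← Fintype.sum_prod_type, h.1.2]⟩

theorem swap (h : IsCoupling ω μ ν) : IsCoupling (ω ∘ Prod.swap) ν μ :=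
  ⟨⟨fun p => h.1.1 p.swap, (Equiv.sum_comp (Equiv.prodComm X X) ω).trans h.1.2⟩, h.2.2, h.2.1⟩

theorem le_fst (h : IsCoupling ω μ ν) (x y : X) : ω (x, y) ≤ μ x :=
  h.2.1 x ▸ Finset.single_le_sum (f := fun z => ω (x, z)) (fun z _ => h.1.1 (x, z))
    (Finset.mem_univ y)

theorem le_snd (h : IsCoupling ω μ ν) (x y : X) : ω (x, y) ≤ ν y :=
  h.swap.le_fst y x

theorem exists_mem_psupp_of_snd_pos (h : IsCoupling ω μ ν) {y : X} (hy : 0 < ν y) :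
    ∃ x, (x, y) ∈ psupp ω := by
  rw [← h.2.2 y, Finset.sum_pos_iff_of_nonneg fun x _ => h.1.1 (x, y)] at hy
  simpa [psupp] using hy

theorem midpoint (h₁ : IsCoupling ω₁ μ ν) (h₂ : IsCoupling ω₂ μ ν) :
    IsCoupling (fun p => (ω₁ p + ω₂ p) / 2) μ ν := by
  refine ⟨⟨fun p => by linarith [h₁.1.1 p, h₂.1.1 p], ?_⟩, fun x => ?_, fun x => ?_⟩ <;>
    rw [← Finset.sum_div, Finset.sum_add_distrib]
  · rw [h₁.1.2, h₂.1.2, add_self_div_two]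
  · rw [h₁.2.1, h₂.2.1, add_self_div_two]
  · rw [h₁.2.2, h₂.2.2, add_self_div_two]

theorem psupp_midpoint (h₁ : IsCoupling ω₁ μ ν) (h₂ : IsCoupling ω₂ μ ν) :
    psupp (fun p => (ω₁ p + ω₂ p) / 2) = psupp ω₁ ∪ psupp ω₂ := by
  ext p
  have hp₁ := h₁.1.1 p
  have hp₂ := h₂.1.1 p
  change 0 < (ω₁ p + ω₂ p) / 2 ↔ 0 < ω₁ p ∨ 0 < ω₂ p
  grind

theorem exists_greatest_psupp {R : Set (X × X)} (h : IsCoupling ω μ ν) (hR : psupp ω ⊆ R) :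
    ∃ ω', IsCoupling ω' μ ν ∧ psupp ω' ⊆ R ∧
      ∀ ω'', IsCoupling ω'' μ ν → psupp ω'' ⊆ R → psupp ω'' ⊆ psupp ω' := by
  obtain ⟨ω', ⟨hω', hω'R⟩, hmax⟩ := (Set.toFinite (psupp '' {ω' : X × X → ℝ |
    IsCoupling ω' μ ν ∧ psupp ω' ⊆ R})).exists_maximalFor' psupp _ ⟨ω, h, hR⟩
  refine ⟨ω', hω', hω'R, fun ω'' hω'' hω''R => ?_⟩
  have hunion := hω'.psupp_midpoint hω''
  have hle := hmax ⟨hω'.midpoint hω'', hunion ▸ Set.union_subset hω'R hω''R⟩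
    (hunion ▸ Set.subset_union_left)
  exact (Set.subset_union_right.trans hunion.ge).trans hle

end IsCoupling

theorem IsDist.isCoupling_prod (hμ : IsDist μ) (hν : IsDist ν) :
    IsCoupling (fun p => μ p.1 * ν p.2) μ ν := by
  have hfst : ∀ x, ∑ y, μ x * ν y = μ x := fun x => by rw [← Finset.mul_sum, hν.2, mul_one]
  have hsnd : ∀ y, ∑ x, μ x * ν y = ν y := fun y => by rw [← Finset.sum_mul, hμ.2, one_mul]
  exact ⟨.of_sum_fst hμ (fun p => mul_nonneg (hμ.1 p.1) (hν.1 p.2)) hfst, hfst, hsnd⟩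

theorem IsDist.exists_isCoupling_self (hμ : IsDist μ) :
    ∃ ω, IsCoupling ω μ μ ∧ psupp ω ⊆ SDelta X := by
  have hfst : ∀ x, ∑ y, (if x = y then μ x else 0) = μ x := fun x => by simp
  refine ⟨fun p => if p.1 = p.2 then μ p.1 else 0,
    ⟨.of_sum_fst hμ (fun p => ?_) hfst, hfst, fun y => by simp⟩, fun p hp => ?_⟩
  · by_cases h : p.1 = p.2 <;> simp [h, hμ.1]
  · by_contra h
    simp [psupp, show p.1 ≠ p.2 from h] at hp

/-- The gluing of a coupling `ω₁` of `μ` and `ν` with a coupling `ω₂` of `ν` and `κ`: given the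
middle point, drawn from `ν`, the outer points are drawn independently. Where `ν b = 0`, the
numerator vanishes too and `0 / 0 = 0` is the intended summand. -/
noncomputable def glue (ν : X → ℝ) (ω₁ ω₂ : X × X → ℝ) : X × X → ℝ :=
  fun p => ∑ b, ω₁ (p.1, b) * ω₂ (b, p.2) / ν b

theorem glue_swap (ν : X → ℝ) (ω₁ ω₂ : X × X → ℝ) (a c : X) :
    glue ν ω₁ ω₂ (a, c) = glue ν (ω₂ ∘ Prod.swap) (ω₁ ∘ Prod.swap) (c, a) := by
  simp [glue, mul_comm]

namespace IsCoupling

theorem glue_summand_nonneg (h₁ : IsCoupling ω₁ μ ν) (h₂ : IsCoupling ω₂ ν κ) (a b c : X) :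
    0 ≤ ω₁ (a, b) * ω₂ (b, c) / ν b :=
  div_nonneg (mul_nonneg (h₁.1.1 _) (h₂.1.1 _)) (h₂.isDist_fst.1 b)

theorem sum_glue_fst (h₁ : IsCoupling ω₁ μ ν) (h₂ : IsCoupling ω₂ ν κ) (a : X) :
    ∑ c, glue ν ω₁ ω₂ (a, c) = μ a := by
  simp only [glue]
  rw [Finset.sum_comm, ← h₁.2.1 a]
  refine Finset.sum_congr rfl fun b _ => ?_
  rw [← Finset.sum_div, ← Finset.mul_sum, h₂.2.1]
  refine mul_div_cancel_of_imp fun hb => ?_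
  exact le_antisymm (hb ▸ h₁.le_snd a b) (h₁.1.1 (a, b))

protected theorem glue (h₁ : IsCoupling ω₁ μ ν) (h₂ : IsCoupling ω₂ ν κ) :
    IsCoupling (glue ν ω₁ ω₂) μ κ := by
  refine ⟨.of_sum_fst h₁.isDist_fst (fun p => Finset.sum_nonneg fun b _ =>
    h₁.glue_summand_nonneg h₂ p.1 b p.2) (h₁.sum_glue_fst h₂), h₁.sum_glue_fst h₂, fun c => ?_⟩
  simpa only [glue_swap ν ω₁ ω₂] using h₂.swap.sum_glue_fst h₁.swap c

open scoped SetRel in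
theorem psupp_glue (h₁ : IsCoupling ω₁ μ ν) (h₂ : IsCoupling ω₂ ν κ) :
    psupp (glue ν ω₁ ω₂) = psupp ω₁ ○ psupp ω₂ := by
  ext ⟨a, c⟩
  change 0 < ∑ b, ω₁ (a, b) * ω₂ (b, c) / ν b ↔ ∃ b, 0 < ω₁ (a, b) ∧ 0 < ω₂ (b, c)
  rw [Finset.sum_pos_iff_of_nonneg fun b _ => h₁.glue_summand_nonneg h₂ a b c]
  refine ⟨fun ⟨b, _, hb⟩ => ⟨b, ?_, ?_⟩, fun ⟨b, hab, hbc⟩ => ⟨b, Finset.mem_univ b, ?_⟩⟩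
  · exact (h₁.1.1 _).lt_of_ne fun h0 => by simp [← h0] at hb
  · exact (h₂.1.1 _).lt_of_ne fun h0 => by simp [← h0] at hb
  · exact div_pos (mul_pos hab hbc) (hab.trans_le (h₁.le_snd a b))

end IsCoupling

end Coupling

section LeastFixedPoint

variable {A : Type*} {F : (A → ℝ) → (A → ℝ)}

theorem exists_isLfpOn (hmono : Monotone F) (h01 : ∀ e, Is01 e → Is01 (F e)) :
    ∃ d, IsLfpOn F d ∧ ∀ e, Is01 e → F e ≤ e → d ≤ e := by
  let G : (A → Set.Icc (0 : ℝ) 1) →o (A → Set.Icc (0 : ℝ) 1) :=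
    ⟨fun e a => ⟨F (fun b => e b) a, h01 _ (fun b => (e b).2) a⟩, fun _ _ h => hmono h⟩
  have hleast : ∀ e, Is01 e → F e ≤ e → (fun a => (G.lfp a : ℝ)) ≤ e := fun e he hle =>
    G.lfp_le (a := fun a => ⟨e a, he a⟩) hle
  refine ⟨fun a => G.lfp a, ⟨fun a => (G.lfp a).2, funext fun a => ?_, fun e he hfix => ?_⟩, hleast⟩
  · exact congrArg Subtype.val (congrFun G.map_lfp a)
  · exact hleast e he hfix.le

theorem IsLfpOn.le_of_map_le {d e : A → ℝ} (hd : IsLfpOn F d) (hmono : Monotone F)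
    (h01 : ∀ e, Is01 e → Is01 (F e)) (he : Is01 e) (hle : F e ≤ e) : d ≤ e := by
  obtain ⟨d', hd', hleast⟩ := exists_isLfpOn hmono h01
  exact le_trans (hd.2.2 d' hd'.1 hd'.2.1) (hleast e he hle)

end LeastFixedPoint

section Reachability

variable {S : Type*} [Fintype S] {P : S × S → S × S → ℝ} {ρ : S × S → ℝ}

theorem reachF_of_mem_SDelta (e : S × S → ℝ) {p : S × S} (hp : p ∈ SDelta S) :
    ReachF P e p = 1 :=
  if_pos hp

theorem reachF_of_notMem_SDelta (e : S × S → ℝ) {p : S × S} (hp : p ∉ SDelta S) :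
    ReachF P e p = ∑ q, P p q * e q :=
  if_neg hp

theorem reachF_mono (hP : ∀ p q, 0 ≤ P p q) : Monotone (ReachF P) := fun d e hde p => by
  by_cases hp : p ∈ SDelta S
  · simp only [reachF_of_mem_SDelta _ hp, le_refl]
  · simp only [reachF_of_notMem_SDelta _ hp]
    exact Finset.sum_le_sum fun q _ => mul_le_mul_of_nonneg_left (hde q) (hP p q)

theorem Is01.reachF (hP : ∀ p, IsDist (P p)) {e : S × S → ℝ} (he : Is01 e) :
    Is01 (ReachF P e) := fun p => by
  by_cases hp : p ∈ SDelta S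
  · simp only [reachF_of_mem_SDelta _ hp, zero_le_one, le_refl, and_self]
  · rw [reachF_of_notMem_SDelta _ hp]
    refine ⟨Finset.sum_nonneg fun q _ => mul_nonneg ((hP p).1 q) (he q).1, ?_⟩
    calc ∑ q, P p q * e q ≤ ∑ q, P p q :=
          Finset.sum_le_sum fun q _ => mul_le_of_le_one_right ((hP p).1 q) (he q).2
      _ = 1 := (hP p).2

theorem eq_one_of_mem_SDelta (hfix : ReachF P ρ = ρ) {p : S × S} (hp : p ∈ SDelta S) : ρ p = 1 :=
  (congrFun hfix p).symm.trans (reachF_of_mem_SDelta ρ hp)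

theorem sum_mul_eq_of_notMem_SDelta (hfix : ReachF P ρ = ρ) {p : S × S} (hp : p ∉ SDelta S) :
    ∑ q, P p q * ρ q = ρ p :=
  (reachF_of_notMem_SDelta ρ hp).symm.trans (congrFun hfix p)

theorem psupp_subset_of_eq_one (hP : ∀ p, IsDist (P p)) (h01 : Is01 ρ) (hfix : ReachF P ρ = ρ)
    {p : S × S} (hp : p ∉ SDelta S) (hone : ρ p = 1) : psupp (P p) ⊆ {q | ρ q = 1} :=
  (hP p).eq_of_le_of_sum_mul_eq (fun q _ => (h01 q).2)
    ((sum_mul_eq_of_notMem_SDelta hfix hp).trans hone)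

theorem IsLfpOn.eq_zero_of_isClosedClass (hP : ∀ p, IsDist (P p)) (hρ : IsLfpOn (ReachF P) ρ)
    {N : Set (S × S)} (hN : IsClosedClass P N) (hdisj : Disjoint N (SDelta S)) :
    ∀ p ∈ N, ρ p = 0 := by
  have h01 : Is01 (Nᶜ.indicator ρ) := fun p => by
    by_cases hp : p ∈ N <;> simp [hp, hρ.1 p]
  have hmono : Monotone (ReachF P) := reachF_mono fun p => (hP p).1
  have hle : ReachF P (Nᶜ.indicator ρ) ≤ Nᶜ.indicator ρ := fun p => by
    by_cases hp : p ∈ N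
    · have hterm : ∀ q, P p q * Nᶜ.indicator ρ q = 0 := fun q => by
        rcases ((hP p).1 q).eq_or_lt with h0 | hpos
        · simp [← h0]
        · simp [hN p hp hpos]
      simp [reachF_of_notMem_SDelta _ (hdisj.notMem_of_mem_left hp), hterm, hp]
    · calc ReachF P (Nᶜ.indicator ρ) p ≤ ReachF P ρ p :=
            hmono (Set.indicator_le_self' fun q _ => (hρ.1 q).1) p
        _ = Nᶜ.indicator ρ p := by simp [hρ.2.1, hp]
  intro p hp
  have hle_zero : ρ p ≤ Nᶜ.indicator ρ p :=
    hρ.le_of_map_le hmono (fun e he => he.reachF hP) h01 hle p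
  exact le_antisymm (by simpa [hp] using hle_zero) (hρ.1 p).1

end Reachability

section Robust

open scoped SetRel

variable {S L : Type*} [Fintype S] {ℓ : S → L} {τ : S → S → ℝ} {P : S × S → S × S → ℝ}
  {X Y Z : Set (S × S)}

theorem IsPolicy.eq_of_mem_psupp (hP : IsPolicy ℓ τ P) {p q : S × S} (hℓ : ℓ p.1 ≠ ℓ p.2)
    (hq : q ∈ psupp (P p)) : q = p :=
  (hP.2.2 p hℓ).subset hq

theorem exists_isPolicy {Q : S × S → (S × S → ℝ) → Prop}
    (h : ∀ p : S × S, ℓ p.1 = ℓ p.2 → ∃ ω, IsCoupling ω (τ p.1) (τ p.2) ∧ Q p ω) :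
    ∃ P, IsPolicy ℓ τ P ∧ ∀ p : S × S, ℓ p.1 = ℓ p.2 → Q p (P p) := by
  choose! ω hω hQ using h
  let P : S × S → S × S → ℝ := fun p => if ℓ p.1 = ℓ p.2 then ω p else Pi.single p 1
  have hP : ∀ p : S × S, ℓ p.1 = ℓ p.2 → P p = ω p := fun p hp => if_pos hp
  have hP' : ∀ p : S × S, ℓ p.1 ≠ ℓ p.2 → P p = Pi.single p 1 := fun p hp => if_neg hp
  refine ⟨P, ⟨fun p => ?_, fun p hp => hP p hp ▸ hω p hp, fun p hp => ?_⟩,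
    fun p hp => hP p hp ▸ hQ p hp⟩
  · by_cases hp : ℓ p.1 = ℓ p.2
    · exact hP p hp ▸ (hω p hp).1
    · exact hP' p hp ▸ isDist_single p
  · rw [hP' p hp, psupp_single]

/-- A policy which, wherever some coupling has support in `X`, chooses one with support in `X` that
is as large as possible. It realises all paths inside `X` simultaneously. -/
def IsFullestPolicy (ℓ : S → L) (τ : S → S → ℝ) (X : Set (S × S))
    (P : S × S → S × S → ℝ) : Prop :=
  IsPolicy ℓ τ P ∧ ∀ p : S × S, ℓ p.1 = ℓ p.2 → ∀ ω, IsCoupling ω (τ p.1) (τ p.2) →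
    psupp ω ⊆ X → psupp (P p) ⊆ X ∧ psupp ω ⊆ psupp (P p)

theorem exists_isFullestPolicy (hτ : IsTransFn τ) (X : Set (S × S)) :
    ∃ P, IsFullestPolicy ℓ τ X P := by
  have hfullest : ∀ p : S × S, ℓ p.1 = ℓ p.2 → ∃ ω', IsCoupling ω' (τ p.1) (τ p.2) ∧
      ∀ ω, IsCoupling ω (τ p.1) (τ p.2) → psupp ω ⊆ X →
        psupp ω' ⊆ X ∧ psupp ω ⊆ psupp ω' := fun p _ => by
    by_cases h : ∃ ω, IsCoupling ω (τ p.1) (τ p.2) ∧ psupp ω ⊆ X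
    · obtain ⟨ω, hω, hωX⟩ := h
      obtain ⟨ω', hω', hω'X, hgreatest⟩ := hω.exists_greatest_psupp hωX
      exact ⟨ω', hω', fun ω'' hω'' hω''X => ⟨hω'X, hgreatest ω'' hω'' hω''X⟩⟩
    · exact ⟨_, (hτ p.1).isCoupling_prod (hτ p.2), fun ω hω hωX => absurd ⟨ω, hω, hωX⟩ h⟩
  exact exists_isPolicy hfullest

/-- The attractor of the diagonal in `X`: there is a path from `p` to `S²_Δ` each step of which
starts at an equally labelled pair of `X` and follows some coupling with support in `X`. No
policy is fixed. -/
inductive ReachesDiag (ℓ : S → L) (τ : S → S → ℝ) (X : Set (S × S)) : S × S → Prop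
  | diag (s : S) : ReachesDiag ℓ τ X (s, s)
  | step {p q : S × S} {ω : S × S → ℝ} (hp : p ∈ X) (hℓ : ℓ p.1 = ℓ p.2)
      (hω : IsCoupling ω (τ p.1) (τ p.2)) (hωX : psupp ω ⊆ X) (hq : q ∈ psupp ω)
      (hreach : ReachesDiag ℓ τ X q) : ReachesDiag ℓ τ X p

namespace ReachesDiag

variable {p : S × S}

theorem label_eq (h : ReachesDiag ℓ τ X p) : ℓ p.1 = ℓ p.2 := by
  cases h with
  | diag => rfl
  | step _ hℓ => exact hℓ

theorem mem (hX : SDelta S ⊆ X) (h : ReachesDiag ℓ τ X p) : p ∈ X := by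
  cases h with
  | diag => exact hX rfl
  | step hp => exact hp

theorem mono (hXY : X ⊆ Y) (h : ReachesDiag ℓ τ X p) : ReachesDiag ℓ τ Y p := by
  induction h with
  | diag s => exact .diag s
  | step hp hℓ hω hωX hq _ ih => exact .step (hXY hp) hℓ hω (hωX.trans hXY) hq ih

theorem swap (h : ReachesDiag ℓ τ X p) : ReachesDiag ℓ τ (SetRel.inv X) p.swap := by
  induction h with
  | diag s => exact .diag s
  | step hp hℓ hω hωX hq _ ih =>
    exact .step hp hℓ.symm hω.swap (Set.preimage_mono hωX) hq ih

theorem exists_isCoupling (hτ : IsTransFn τ) (hX : SDelta S ⊆ X) (h : ReachesDiag ℓ τ X p) :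
    ∃ ω, IsCoupling ω (τ p.1) (τ p.2) ∧ psupp ω ⊆ X := by
  cases h with
  | diag s =>
    obtain ⟨ω, hω, hdiag⟩ := (hτ s).exists_isCoupling_self
    exact ⟨ω, hω, hdiag.trans hX⟩
  | step _ _ hω hωX => exact ⟨_, hω, hωX⟩

end ReachesDiag

theorem IsPolicy.reachesDiag {p : S × S} (hP : IsPolicy ℓ τ P) (h : SupportsPathToDelta P X p) :
    ReachesDiag ℓ τ X p := by
  obtain ⟨⟨s, t⟩, rfl : s = t, hpath, -⟩ := h
  induction hpath using Relation.ReflTransGen.head_induction_on with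
  | refl => exact .diag s
  | @head a b hstep _ ih =>
    obtain ⟨haX, hsupp, hab⟩ := hstep
    by_cases hℓ : ℓ a.1 = ℓ a.2
    · exact .step haX hℓ (hP.2.1 a hℓ) hsupp hab ih
    · obtain rfl : b = a := hP.eq_of_mem_psupp hℓ hab
      exact ih

theorem IsFullestPolicy.supportsPathToDelta (hτ : IsTransFn τ) (hX : SDelta S ⊆ X)
    (hP : IsFullestPolicy ℓ τ X P) {p : S × S} (h : ReachesDiag ℓ τ X p) :
    SupportsPathToDelta P X p := by
  induction h with
  | diag s =>
    obtain ⟨ω, hω, hωX⟩ := (ReachesDiag.diag (ℓ := ℓ) s).exists_isCoupling hτ hX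
    exact ⟨(s, s), rfl, .refl, hX rfl, (hP.2 (s, s) rfl ω hω hωX).1⟩
  | @step p q ω hp hℓ hω hωX hq _ ih =>
    obtain ⟨r, hr, hpath, hend⟩ := ih
    obtain ⟨hsupp, hsub⟩ := hP.2 p hℓ ω hω hωX
    exact ⟨r, hr, .head ⟨hp, hsupp, hsub hq⟩ hpath, hend⟩

theorem filterFn_eq_setOf_reachesDiag (hτ : IsTransFn τ) (hX : SDelta S ⊆ X) :
    FilterFn ℓ τ X = {p | ReachesDiag ℓ τ X p} := by
  obtain ⟨P, hP⟩ := exists_isFullestPolicy (ℓ := ℓ) hτ X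
  exact Set.Subset.antisymm (fun p ⟨_, P', hP', h⟩ => hP'.reachesDiag h)
    fun p h => ⟨h.mem hX, P, hP.1, hP.supportsPathToDelta hτ hX h⟩

/-- A reflexive relation from every element of which the diagonal is reached inside the relation:
a robust bisimulation, except that it need not be an equivalence relation. -/
structure IsSelfReaching (ℓ : S → L) (τ : S → S → ℝ) (X : Set (S × S)) : Prop where
  diag_subset : SDelta S ⊆ X
  reaches : ∀ p ∈ X, ReachesDiag ℓ τ X p

theorem IsSelfReaching.inv (hX : IsSelfReaching ℓ τ X) : IsSelfReaching ℓ τ (SetRel.inv X) :=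
  ⟨fun _ hp => hX.diag_subset hp.symm, fun p hp => (hX.reaches p.swap hp).swap⟩

theorem ReachesDiag.comp_left (hτ : IsTransFn τ) (hX : IsSelfReaching ℓ τ X) (hXZ : X ⊆ Z)
    (hcomp : X ○ Y ⊆ Z) {s t u : S} (hst : (s, t) ∈ X) (htu : ReachesDiag ℓ τ Y (t, u)) :
    ReachesDiag ℓ τ Z (s, u) := by
  generalize hp : (t, u) = p at htu
  induction htu generalizing s t u with
  | diag v =>
    obtain ⟨rfl, rfl⟩ := Prod.mk.inj hp
    exact (hX.reaches _ hst).mono hXZ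
  | @step p q ω hpY hℓ hω hωY hq _ ih =>
    subst hp
    have hreach := hX.reaches _ hst
    obtain ⟨ω₁, hω₁, hω₁X⟩ := hreach.exists_isCoupling hτ hX.diag_subset
    obtain ⟨s', hs'⟩ : ∃ s', (s', q.1) ∈ psupp ω₁ :=
      hω₁.exists_mem_psupp_of_snd_pos (lt_of_lt_of_le hq (hω.le_fst q.1 q.2))
    have hglue := hω₁.psupp_glue hω
    exact .step (q := (s', q.2)) (hcomp ⟨t, hst, hpY⟩) (hreach.label_eq.trans hℓ) (hω₁.glue hω)
      (hglue.subset.trans ((SetRel.comp_subset_comp hω₁X hωY).trans hcomp))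
      (hglue.superset ⟨q.1, hs', hq⟩) (ih (hω₁X hs') rfl)

theorem ReachesDiag.comp_right (hτ : IsTransFn τ) (hX : IsSelfReaching ℓ τ X) (hXZ : X ⊆ Z)
    (hcomp : Y ○ X ⊆ Z) {s t u : S} (hst : ReachesDiag ℓ τ Y (s, t)) (htu : (t, u) ∈ X) :
    ReachesDiag ℓ τ Z (s, u) := by
  have hcomp_inv : SetRel.inv X ○ SetRel.inv Y ⊆ SetRel.inv Z :=
    (SetRel.inv_comp Y X).superset.trans (SetRel.inv_mono hcomp)
  have hut : (u, t) ∈ SetRel.inv X := htu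
  exact (ReachesDiag.comp_left hτ hX.inv (SetRel.inv_mono hXZ) hcomp_inv hut hst.swap).swap

namespace IsSelfReaching

theorem comp (hτ : IsTransFn τ) (hX : IsSelfReaching ℓ τ X) (hY : IsSelfReaching ℓ τ Y) :
    IsSelfReaching ℓ τ (X ○ Y) := by
  refine ⟨fun p hp => ⟨p.1, hX.diag_subset rfl, hY.diag_subset hp⟩, fun p ⟨t, hpt, htp⟩ => ?_⟩
  have hXXY : X ⊆ X ○ Y := fun q hq => ⟨q.2, hq, hY.diag_subset rfl⟩
  exact (hY.reaches _ htp).comp_left hτ hX hXXY subset_rfl hpt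

theorem eq_one (hX : IsSelfReaching ℓ τ X) (hP : IsFullestPolicy ℓ τ X P)
    {ρ : S × S → ℝ} (h01 : Is01 ρ) (hfix : ReachF P ρ = ρ) : ∀ p ∈ X, ρ p = 1 := by
  intro p hp
  obtain ⟨m, hm, hmin⟩ := Set.exists_min_image X ρ (Set.toFinite X) ⟨p, hp⟩
  have hreach_one : ∀ q, ReachesDiag ℓ τ X q → ρ q = ρ m → ρ m = 1 := by
    intro q hq hqm
    induction hq with
    | diag s => exact hqm ▸ eq_one_of_mem_SDelta hfix rfl
    | @step q r ω _ hℓ hω hωX hr _ ih =>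
      by_cases hdiag : q ∈ SDelta S
      · exact hqm ▸ eq_one_of_mem_SDelta hfix hdiag
      obtain ⟨hsupp, hsub⟩ := hP.2 q hℓ ω hω hωX
      exact ih ((hP.1.1 q).eq_of_ge_of_sum_mul_eq (fun r' hr' => hmin r' (hsupp hr'))
        ((sum_mul_eq_of_notMem_SDelta hfix hdiag).trans hqm) r (hsub hr))
  have hm_one : ρ m = 1 := hreach_one m (hX.reaches m hm) rfl
  exact le_antisymm (h01 p).2 (hm_one ▸ hmin p hp)

end IsSelfReaching

theorem isSelfReaching_setOf_eq_one (hP : IsPolicy ℓ τ P) {ρ : S × S → ℝ}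
    (hρ : IsLfpOn (ReachF P) ρ) : IsSelfReaching ℓ τ {p | ρ p = 1} := by
  have hdiag : SDelta S ⊆ {p | ρ p = 1} := fun p hp => eq_one_of_mem_SDelta hρ.2.1 hp
  let N : Set (S × S) := {p | ρ p = 1 ∧ ¬ ReachesDiag ℓ τ {q | ρ q = 1} p}
  have hN_off : ∀ p ∈ N, p ∉ SDelta S := by
    rintro ⟨s, t⟩ hp (rfl : s = t)
    exact hp.2 (.diag s)
  have hN_closed : IsClosedClass P N := fun p hp q hq => by
    have hsupp := psupp_subset_of_eq_one hP.1 hρ.1 hρ.2.1 (hN_off p hp) hp.1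
    by_cases hℓ : ℓ p.1 = ℓ p.2
    · exact ⟨hsupp hq, fun h => hp.2 (.step hp.1 hℓ (hP.2.1 p hℓ) hsupp hq h)⟩
    · obtain rfl : q = p := hP.eq_of_mem_psupp hℓ hq
      exact hp
  refine ⟨hdiag, fun p hp => by_contra fun h => ?_⟩
  have hzero : ρ p = 0 :=
    hρ.eq_zero_of_isClosedClass hP.1 hN_closed (Set.disjoint_left.2 hN_off) p ⟨hp, h⟩
  exact zero_ne_one (hzero.symm.trans hp)

/-- Robust probabilistic bisimilarity `≃` as a relation. -/
def robustRel (ℓ : S → L) (τ : S → S → ℝ) : Set (S × S) :=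
  {p | Robust ℓ τ p.1 p.2}

theorem IsSelfReaching.subset_robustRel (hτ : IsTransFn τ) (hX : IsSelfReaching ℓ τ X) :
    X ⊆ robustRel ℓ τ := fun p hp => by
  obtain ⟨P, hP⟩ := exists_isFullestPolicy (ℓ := ℓ) hτ X
  obtain ⟨ρ, hρ, -⟩ := exists_isLfpOn (reachF_mono fun p => (hP.1.1 p).1)
    fun _ he => he.reachF hP.1.1
  exact ⟨P, ρ, hP.1, hρ, hX.eq_one hP hρ.1 hρ.2.1 p hp⟩

theorem isSelfReaching_robustRel (hτ : IsTransFn τ) : IsSelfReaching ℓ τ (robustRel ℓ τ) := by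
  have hdiag : IsSelfReaching ℓ τ (SDelta S) := ⟨subset_rfl, by
    rintro ⟨s, t⟩ (rfl : s = t)
    exact .diag s⟩
  refine ⟨hdiag.subset_robustRel hτ, fun p ⟨P, ρ, hP, hρ, hone⟩ => ?_⟩
  have hself := isSelfReaching_setOf_eq_one hP hρ
  exact (hself.reaches p hone).mono (hself.subset_robustRel hτ)

theorem isBisim_robustRel (hτ : IsTransFn τ) : IsBisim ℓ τ (robustRel ℓ τ) := by
  have hself : IsSelfReaching ℓ τ (robustRel ℓ τ) := isSelfReaching_robustRel hτ
  refine ⟨⟨fun s => hself.diag_subset rfl, fun h => hself.inv.subset_robustRel hτ h,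
    fun h₁ h₂ => (hself.comp hτ hself).subset_robustRel hτ ⟨_, h₁, h₂⟩⟩, fun p hp => ?_⟩
  have hreach := hself.reaches p hp
  exact ⟨hreach.label_eq, hreach.exists_isCoupling hτ hself.diag_subset⟩

theorem robustRel_subset_pruneFn_filterFn (hτ : IsTransFn τ) {R : Set (S × S)}
    (hlow : robustRel ℓ τ ⊆ R) (hleft : robustRel ℓ τ ○ R ⊆ R) (hright : R ○ robustRel ℓ τ ⊆ R) :
    robustRel ℓ τ ⊆ PruneFn (FilterFn ℓ τ R) := by
  have hself : IsSelfReaching ℓ τ (robustRel ℓ τ) := isSelfReaching_robustRel hτ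
  rw [filterFn_eq_setOf_reachesDiag hτ (hself.diag_subset.trans hlow)]
  exact fun p hp => ⟨(hself.reaches p hp).mono hlow, fun u =>
    ⟨.comp_left hτ hself hlow hleft hp, fun hu => hu.comp_right hτ hself hlow hright hp⟩⟩

theorem refine_loop_invariant_general (hτ : IsTransFn τ) {R B : Set (S × S)}
    (hlow : robustRel ℓ τ ⊆ R) (hleft : robustRel ℓ τ ○ R ⊆ R) (hright : R ○ robustRel ℓ τ ⊆ R)
    (hB : IsGreatestBisimIn ℓ τ (PruneFn (FilterFn ℓ τ R)) B) :
    IsBisim ℓ τ B ∧ robustRel ℓ τ ⊆ B ∧ B ⊆ {p | Bisimilar ℓ τ p.1 p.2} :=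
  ⟨hB.1, hB.2.2 _ (isBisim_robustRel hτ) (robustRel_subset_pruneFn_filterFn hτ hlow hleft hright),
    fun _ hp => ⟨B, hB.1, hp⟩⟩

end Robust

/-- Proposition 18 (loop invariant): if `R` is a bisimulation with `≃ ⊆ R ⊆ ∼`, then
`Refine(R)` is a bisimulation with `≃ ⊆ Refine(R) ⊆ ∼`. -/
theorem refine_loop_invariant {S L : Type*} [Fintype S] [Nonempty S] [Fintype L]
    (ℓ : S → L) (hℓ : ∃ a b : S, ℓ a ≠ ℓ b)
    (τ : S → S → ℝ) (hτ : IsTransFn τ)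
    (R : Set (S × S)) (hR : IsBisim ℓ τ R)
    (hlow : {p : S × S | Robust ℓ τ p.1 p.2} ⊆ R)
    (hhigh : R ⊆ {p : S × S | Bisimilar ℓ τ p.1 p.2})
    (B : Set (S × S)) (hB : IsGreatestBisimIn ℓ τ (PruneFn (FilterFn ℓ τ R)) B) :
    IsBisim ℓ τ B ∧
    {p : S × S | Robust ℓ τ p.1 p.2} ⊆ B ∧
    B ⊆ {p : S × S | Bisimilar ℓ τ p.1 p.2} :=
  refine_loop_invariant_general hτ hlow (fun _ ⟨_, h₁, h₂⟩ => hR.1.trans (hlow h₁) h₂)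
    (fun _ ⟨_, h₁, h₂⟩ => hR.1.trans h₁ (hlow h₂)) hB
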